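/- In the setting of the proof of Ehrenfeucht's theorem: let M be a countable non-standard model of PA with SSy(M) ⊆ S for a Scott set S, let a ∈ M − ω, let f₀, …, f_{k+1} be M-coded functions from {n ∈ M : n < 2^a} to M, and let X₀, …, X_k ∈ S be such that p_k(x) = {x < 2^a} ∪ {(f_i(x))_n = X_i(n) : i ≤ k, n ∈ ω} is finitely realizable in M. Let T be the set of tuples σ⃗ = (σ_i : i ≤ k+1) of finite binary sequences of equal length such that the set W(σ⃗) = {c < 2^a : for all i ≤ k+1 and n < |σ_i|, (f_i(c))_n = σ_i(n)} is nonempty in M, and let T' be the set of finite binary sequences τ such that (τ₀, …, τ_k, τ) ∈ T where τ_i is the initial segment of X_i of length |τ|. Then T' is an infinite binary tree that is Turing reducible to (⊕_{i≤k} X_i) ⊕ T; consequently, since T ∈ SSy(M) ⊆ S and S is a Scott set, S contains an infinite path X_{k+1} of T', and p_{k+1}(x) = p_k(x) ∪ {(f_{k+1}(x))_n = X_{k+1}(n) : n ∈ ω} is finitely realizable in M. -/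

import Mathlib

open FirstOrder FirstOrder.Language

/-- Function symbols of the language of arithmetic: `0`, `1`, `+`, `·`. -/
inductive arithFunc : ℕ → Type
  | zero : arithFunc 0
  | one : arithFunc 0
  | add : arithFunc 2
  | mul : arithFunc 2
  deriving DecidableEq

/-- Relation symbols of the language of arithmetic: `<`. -/
inductive arithRel : ℕ → Type
  | lt : arithRel 2
  deriving DecidableEq

/-- The first-order language of arithmetic `{0, 1, +, ·, <}`. -/
def arith : FirstOrder.Language := ⟨arithFunc, arithRel⟩

namespace Arith

variable {M : Type*} [arith.Structure M]

/-- The interpretation of `0`. -/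
def zeroM (M : Type*) [arith.Structure M] : M :=
  Structure.funMap (L := arith) arithFunc.zero ![]

/-- The interpretation of `1`. -/
def oneM (M : Type*) [arith.Structure M] : M :=
  Structure.funMap (L := arith) arithFunc.one ![]

/-- The interpretation of `+`. -/
def addM (x y : M) : M := Structure.funMap (L := arith) arithFunc.add ![x, y]

/-- The interpretation of `·`. -/
def mulM (x y : M) : M := Structure.funMap (L := arith) arithFunc.mul ![x, y]

/-- The interpretation of `<`. -/
def ltM (x y : M) : Prop := Structure.RelMap (L := arith) arithRel.lt ![x, y]

/-- Non-strict order. -/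
def leM (x y : M) : Prop := ltM x y ∨ x = y

/-- The numeral `n` in `M`: `0`, or `1 + 1 + ⋯ + 1`. -/
def numeral (M : Type*) [arith.Structure M] : ℕ → M
  | 0 => zeroM M
  | n + 1 => addM (numeral M n) (oneM M)

/-- The standard `arith`-structure on `ℕ`. -/
instance : arith.Structure ℕ where
  funMap {n} f v :=
    match f with
    | .zero => 0
    | .one => 1
    | .add => v 0 + v 1
    | .mul => v 0 * v 1
  RelMap {n} r v :=
    match r with
    | .lt => v 0 < v 1

/-- `M` is a model of Peano arithmetic: it satisfies the finitely many basic axioms of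
`PA` together with induction for all parametrically definable sets (which is equivalent
to the usual first-order induction scheme). -/
def IsPAModel (M : Type*) [arith.Structure M] : Prop :=
  (∀ x : M, addM x (zeroM M) = x) ∧
  (∀ x y : M, addM x (addM y (oneM M)) = addM (addM x y) (oneM M)) ∧
  (∀ x : M, mulM x (zeroM M) = zeroM M) ∧
  (∀ x y : M, mulM x (addM y (oneM M)) = addM (mulM x y) x) ∧
  (∀ x : M, ¬ ltM x (zeroM M)) ∧
  (∀ x y : M, ltM x (addM y (oneM M)) ↔ (ltM x y ∨ x = y)) ∧
  (∀ x : M, addM x (oneM M) ≠ zeroM M) ∧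
  (∀ x y : M, addM x (oneM M) = addM y (oneM M) → x = y) ∧
  (∀ s : Set M, Set.Definable₁ (Set.univ : Set M) arith s →
    zeroM M ∈ s → (∀ x ∈ s, addM x (oneM M) ∈ s) → ∀ x : M, x ∈ s)

/-- An element of `M` is standard if it is a numeral. -/
def IsStd (x : M) : Prop := ∃ n : ℕ, x = numeral M n

/-- `M` is a non-standard model of `PA`: a model of `PA` not isomorphic to the standard
model `ℕ`. -/
def NonstandardModel (M : Type*) [arith.Structure M] : Prop :=
  IsPAModel M ∧ ¬ Nonempty (M ≃[arith] ℕ)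

/-- `(x)_i = 1`: the `i`-th binary digit of `x` is `1`, for standard `i`.  This is expressed
by saying that `x = u·2^(i+1) + (2^i + v)` with `v < 2^i`, where `2^i`, `2^(i+1)` are
numerals. -/
def digitB (x : M) (i : ℕ) : Prop :=
  ∃ u v : M, x = addM (mulM u (numeral M (2 ^ (i + 1)))) (addM (numeral M (2 ^ i)) v) ∧
    ltM v (numeral M (2 ^ i))

/-- The standard system of `M`: the collection of subsets of `ℕ` coded by some
non-standard element of `M` (via its standard binary digits). -/
def SSy (M : Type*) [arith.Structure M] : Set (Set ℕ) :=
  {X | ∃ a : M, ¬ IsStd a ∧ ∀ i : ℕ, i ∈ X ↔ digitB a i}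

/-- A function `M → M` is definable (with parameters) if its graph is a definable set. -/
def DefinableFun₁ (f : M → M) : Prop :=
  Set.Definable (Set.univ : Set M) arith {v : Fin 2 → M | f (v 0) = v 1}

/-- A `k`-ary function `M^k → M` is definable (with parameters) if its graph is a
definable set. -/
def DefinableFun {k : ℕ} (F : (Fin k → M) → M) : Prop :=
  Set.Definable (Set.univ : Set M) arith
    {v : Fin (k + 1) → M | F (fun i => v i.castSucc) = v (Fin.last k)}

/-- `c` is the internal cardinality of the set `D ⊆ M`: there is an `M`-definable
bijection between `{x : x < c}` and `D`. -/
def InternalCard (D : Set M) (c : M) : Prop :=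
  ∃ f : M → M, DefinableFun₁ f ∧ Set.BijOn f {x : M | ltM x c} D

/-- `y = 2^x` in the model `M`, expressed via the existence of a definable function
satisfying the recursion of the base-`2` exponential up to `x`. -/
def IsPow2 (x y : M) : Prop :=
  ∃ f : M → M, DefinableFun₁ f ∧ f (zeroM M) = oneM M ∧
    (∀ z : M, ltM z x → f (addM z (oneM M)) = addM (f z) (f z)) ∧ f x = y

end Arith

namespace Arith

/-- Relativized partial recursiveness: `RecursiveIn O f` means the partial function `f`
is partial recursive in the total oracle `O`.  This mirrors `Nat.Partrec`, with an extra
constructor for the oracle. -/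
inductive RecursiveIn (O : ℕ → ℕ) : (ℕ →. ℕ) → Prop
  | zero : RecursiveIn O (pure 0)
  | succ : RecursiveIn O Nat.succ
  | left : RecursiveIn O ↑fun n : ℕ => n.unpair.1
  | right : RecursiveIn O ↑fun n : ℕ => n.unpair.2
  | oracle : RecursiveIn O O
  | pair {f g} : RecursiveIn O f → RecursiveIn O g →
      RecursiveIn O fun n => Nat.pair <$> f n <*> g n
  | comp {f g} : RecursiveIn O f → RecursiveIn O g → RecursiveIn O fun n => g n >>= f
  | prec {f g} : RecursiveIn O f → RecursiveIn O g → RecursiveIn O (Nat.unpaired fun a n =>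
      n.rec (f a) fun y IH => do let i ← IH; g (Nat.pair a (Nat.pair y i)))
  | rfind {f} : RecursiveIn O f →
      RecursiveIn O fun a => Nat.rfind fun n => (fun m => m = 0) <$> f (Nat.pair a n)

open Classical in
/-- The characteristic function of a set of natural numbers. -/
noncomputable def charFn (X : Set ℕ) : ℕ → ℕ := fun n => if n ∈ X then 1 else 0

/-- Turing reducibility between sets of natural numbers. -/
def TuringLE (Y X : Set ℕ) : Prop := RecursiveIn (charFn X) (charFn Y)

/-- The Turing join `X ⊕ Y = 2X ∪ (2Y + 1)`. -/
def turingJoin (X Y : Set ℕ) : Set ℕ :=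
  {n | ∃ m ∈ X, n = 2 * m} ∪ {n | ∃ m ∈ Y, n = 2 * m + 1}

/-- A Turing ideal: a collection of subsets of `ℕ` closed under Turing join and Turing
reducibility. -/
def TuringIdeal (S : Set (Set ℕ)) : Prop :=
  (∀ X ∈ S, ∀ Y ∈ S, turingJoin X Y ∈ S) ∧
  (∀ X ∈ S, ∀ Y : Set ℕ, TuringLE Y X → Y ∈ S)

/-- The Turing ideal generated by a collection of subsets of `ℕ`. -/
def tIdealGen (C : Set (Set ℕ)) : Set (Set ℕ) :=
  ⋂₀ {I | TuringIdeal I ∧ C ⊆ I}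

/-- `T ⊆ ℕ` codes a binary tree: the set of finite binary sequences whose codes lie in
`T` is closed under initial segments. -/
def IsBinTreeSet (T : Set ℕ) : Prop :=
  ∀ s : List Bool, Encodable.encode s ∈ T → ∀ t : List Bool, t <+: s → Encodable.encode t ∈ T

/-- The tree coded by `T` is infinite. -/
def TreeInf (T : Set ℕ) : Prop := {s : List Bool | Encodable.encode s ∈ T}.Infinite

/-- `P ⊆ ℕ`, viewed as an infinite branch via its characteristic function, is a path
through the tree coded by `T`. -/
def PathThrough (P T : Set ℕ) : Prop :=
  ∀ f : ℕ → Bool, (∀ i : ℕ, f i = true ↔ i ∈ P) →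
    ∀ m : ℕ, Encodable.encode (List.ofFn fun i : Fin m => f i) ∈ T

/-- A Scott set: a nonempty Turing ideal such that every infinite binary tree in it has
an infinite path in it. -/
def ScottSet (S : Set (Set ℕ)) : Prop :=
  S.Nonempty ∧ TuringIdeal S ∧
  ∀ T ∈ S, IsBinTreeSet T → TreeInf T → ∃ P ∈ S, PathThrough P T

open Classical in
/-- The characteristic function of a set, with values in `Bool`. -/
noncomputable def chi (X : Set ℕ) : ℕ → Bool := fun n => if n ∈ X then true else false

/-- The iterated Turing join `⊕_{i<k} X i`. -/
def joinMany : {k : ℕ} → (Fin k → Set ℕ) → Set ℕ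
  | 0, _ => ∅
  | (k + 1), X => turingJoin (joinMany fun i => X i.castSucc) (X (Fin.last k))

end Arith

namespace Arith

section Definability

variable {M : Type*} [arith.Structure M] {n m : ℕ}

/-- A predicate on tuples of `M` is definable with parameters. -/
def DefPred (P : (Fin n → M) → Prop) : Prop :=
  Set.Definable (Set.univ : Set M) arith {v | P v}

/-- A function on tuples of `M` has a graph definable with parameters. -/
def DefTerm (t : (Fin n → M) → M) : Prop :=
  DefPred fun w : Fin (n + 1) → M => w 0 = t fun i => w i.succ

theorem DefPred.and {P Q : (Fin n → M) → Prop} (hP : DefPred P) (hQ : DefPred Q) :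
    DefPred fun v => P v ∧ Q v :=
  Set.Definable.inter hP hQ

theorem DefPred.or {P Q : (Fin n → M) → Prop} (hP : DefPred P) (hQ : DefPred Q) :
    DefPred fun v => P v ∨ Q v :=
  Set.Definable.union hP hQ

theorem DefPred.not {P : (Fin n → M) → Prop} (hP : DefPred P) : DefPred fun v => ¬ P v :=
  Set.Definable.compl hP

theorem DefPred.congr {P Q : (Fin n → M) → Prop} (hP : DefPred P) (h : ∀ v, P v ↔ Q v) :
    DefPred Q := by
  rwa [show Q = P from funext fun v => propext (h v).symm]

theorem DefPred.imp {P Q : (Fin n → M) → Prop} (hP : DefPred P) (hQ : DefPred Q) :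
    DefPred fun v => P v → Q v := by
  simpa only [imp_iff_not_or] using hP.not.or hQ

theorem DefPred.iff {P Q : (Fin n → M) → Prop} (hP : DefPred P) (hQ : DefPred Q) :
    DefPred fun v => P v ↔ Q v := by
  simpa only [iff_iff_implies_and_implies] using (hP.imp hQ).and (hQ.imp hP)

theorem DefPred.forall_finite {ι : Type*} [Finite ι] {P : ι → (Fin n → M) → Prop}
    (hP : ∀ i, DefPred (P i)) : DefPred fun v => ∀ i, P i v := by
  have := Set.definable_iInter_of_finite hP
  rwa [← Set.ofPred_forall] at this

theorem DefPred.reindex {P : (Fin n → M) → Prop} (hP : DefPred P) (σ : Fin n → Fin m) :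
    DefPred fun v : Fin m → M => P fun i => v (σ i) :=
  Set.Definable.preimage_comp σ hP

theorem DefPred.exists {Q : (Fin n → M) → M → Prop}
    (h : DefPred fun w : Fin (n + 1) → M => Q (fun i => w i.succ) (w 0)) :
    DefPred fun v => ∃ y, Q v y := by
  have := Set.Definable.image_comp h Fin.succ
  refine (congrArg _ (Set.ext fun v => ?_)).mp this
  constructor
  · rintro ⟨w, hw, rfl⟩
    exact ⟨w 0, hw⟩
  · rintro ⟨y, hy⟩
    exact ⟨Fin.cons y v, by simpa using hy, by ext i; simp⟩

theorem DefPred.forall {Q : (Fin n → M) → M → Prop}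
    (h : DefPred fun w : Fin (n + 1) → M => Q (fun i => w i.succ) (w 0)) :
    DefPred fun v => ∀ y, Q v y := by
  simpa only [not_exists, not_not] using (DefPred.exists (Q := fun v y => ¬ Q v y) h.not).not

theorem DefTerm.reindex {t : (Fin n → M) → M} (ht : DefTerm t) (σ : Fin n → Fin m) :
    DefTerm fun v : Fin m → M => t fun i => v (σ i) := by
  have := DefPred.reindex ht (Fin.cons 0 fun i => (σ i).succ : Fin (n + 1) → Fin (m + 1))
  simpa [DefTerm] using this

theorem DefPred.subst {P : (Fin n → M) → Prop} (hP : DefPred P)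
    {t : Fin n → (Fin m → M) → M} (ht : ∀ i, DefTerm (t i)) :
    DefPred fun v => P fun i => t i v := by
  have h1 : Set.Definable (Set.univ : Set M) arith
      {w : Fin m ⊕ Fin n → M | P fun i => w (Sum.inr i)} :=
    Set.Definable.preimage_comp Sum.inr hP
  have h2 : ∀ i, Set.Definable (Set.univ : Set M) arith
      {w : Fin m ⊕ Fin n → M | w (Sum.inr i) = t i fun j => w (Sum.inl j)} := fun i => by
    have := Set.Definable.preimage_comp
      (Fin.cons (Sum.inr i) fun j => Sum.inl j : Fin (m + 1) → Fin m ⊕ Fin n) (ht i)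
    simpa [Set.preimage] using this
  refine (congrArg _ (Set.ext fun v => ?_)).mp
    (h1.inter (Set.definable_iInter_of_finite h2)).exists_of_finite
  simp only [Set.mem_ofPred_eq, Set.mem_inter_iff, Set.mem_iInter, Sum.elim_inr, Sum.elim_inl]
  constructor
  · rintro ⟨u, hu, hut⟩
    rwa [show u = fun i => t i v from funext hut] at hu
  · exact fun h => ⟨_, h, fun _ => rfl⟩

theorem DefTerm.subst {s : (Fin n → M) → M} (hs : DefTerm s)
    {t : Fin n → (Fin m → M) → M} (ht : ∀ i, DefTerm (t i)) :
    DefTerm fun v => s fun i => t i v := by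
  have hvar : DefTerm fun w : Fin (m + 1) → M => w 0 :=
    ⟨(Term.var 0).equal (Term.var 1), by ext; simp [Formula.Realize, Term.equal]⟩
  have := DefPred.subst (m := m + 1) hs
    (t := Fin.cons (fun w => w 0) fun i w => t i fun j => w j.succ) (by
      intro i
      refine Fin.cases ?_ (fun i => ?_) i
      · exact hvar
      · exact (ht i).reindex Fin.succ)
  simpa [DefTerm] using this

theorem defTerm_var (i : Fin n) : DefTerm fun v : Fin n → M => v i :=
  ⟨(Term.var 0).equal (Term.var i.succ), by ext; simp⟩

theorem defTerm_const (c : M) : DefTerm fun _ : Fin n → M => c :=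
  ⟨(Term.var 0).equal (arith.con (⟨c, trivial⟩ : (Set.univ : Set M))).term, by ext; simp⟩

theorem DefPred.subst₂ {R : M → M → Prop} (hR : DefPred fun w : Fin 2 → M => R (w 0) (w 1))
    {s t : (Fin n → M) → M} (hs : DefTerm s) (ht : DefTerm t) :
    DefPred fun v => R (s v) (t v) := by
  simpa using hR.subst (t := ![s, t]) (by intro i; fin_cases i; exacts [hs, ht])

theorem DefTerm.subst₁ {g : M → M} (hg : DefTerm fun w : Fin 1 → M => g (w 0))
    {t : (Fin n → M) → M} (ht : DefTerm t) : DefTerm fun v => g (t v) :=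
  hg.subst (t := fun _ => t) fun _ => ht

theorem DefTerm.subst₂ {g : M → M → M} (hg : DefTerm fun w : Fin 2 → M => g (w 0) (w 1))
    {s t : (Fin n → M) → M} (hs : DefTerm s) (ht : DefTerm t) :
    DefTerm fun v => g (s v) (t v) := by
  simpa using DefTerm.subst hg (t := ![s, t]) (by intro i; fin_cases i; exacts [hs, ht])

theorem DefTerm.funMap₂ (g : arith.Functions 2) {s t : (Fin n → M) → M} (hs : DefTerm s)
    (ht : DefTerm t) : DefTerm fun v => Structure.funMap g ![s v, t v] :=
  DefTerm.subst₂ (g := fun x y => Structure.funMap g ![x, y])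
    (Set.Definable.mono (Set.empty_definable_iff.2
      ⟨(Term.var 0).equal (g.apply₂ (Term.var 1) (Term.var 2)), by
        ext v
        simp only [Set.mem_ofPred_eq, Formula.realize_equal, Term.realize_var,
          Term.realize_functions_apply₂]
        rfl⟩) (Set.empty_subset _)) hs ht

theorem DefTerm.add {s t : (Fin n → M) → M} (hs : DefTerm s) (ht : DefTerm t) :
    DefTerm fun v => addM (s v) (t v) :=
  DefTerm.funMap₂ arithFunc.add hs ht

theorem DefTerm.mul {s t : (Fin n → M) → M} (hs : DefTerm s) (ht : DefTerm t) :
    DefTerm fun v => mulM (s v) (t v) :=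
  DefTerm.funMap₂ arithFunc.mul hs ht

theorem DefPred.relMap₂ (r : arith.Relations 2) {s t : (Fin n → M) → M} (hs : DefTerm s)
    (ht : DefTerm t) : DefPred fun v => Structure.RelMap r ![s v, t v] :=
  DefPred.subst₂ (R := fun x y => Structure.RelMap r ![x, y])
    (Set.Definable.mono (Set.empty_definable_iff.2
      ⟨r.formula₂ (Term.var 0) (Term.var 1), by
        ext v
        simp only [Set.mem_ofPred_eq, Formula.realize_rel₂, Term.realize_var]⟩)
      (Set.empty_subset _)) hs ht

theorem DefPred.lt {s t : (Fin n → M) → M} (hs : DefTerm s) (ht : DefTerm t) :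
    DefPred fun v => ltM (s v) (t v) :=
  DefPred.relMap₂ arithRel.lt hs ht

theorem DefPred.eq {s t : (Fin n → M) → M} (hs : DefTerm s) (ht : DefTerm t) :
    DefPred fun v => s v = t v :=
  DefPred.subst₂ (R := fun x y => x = y)
    ⟨(Term.var 0).equal (Term.var 1), by ext; simp⟩ hs ht

theorem DefinableFun₁.defTerm {g : M → M} (hg : DefinableFun₁ g) {t : (Fin n → M) → M}
    (ht : DefTerm t) : DefTerm fun v => g (t v) :=
  DefTerm.subst₁ (by
    have := DefPred.reindex (P := fun w : Fin 2 → M => g (w 0) = w 1) hg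
      (![1, 0] : Fin 2 → Fin 2)
    simpa [DefTerm, eq_comm] using this) ht

/-- Unique choice for definable relations. -/
theorem exists_defTerm_of_existsUnique {R : (Fin n → M) → M → Prop}
    (hR : DefPred fun w : Fin (n + 1) → M => R (fun i => w i.succ) (w 0)) :
    ∃ F : (Fin n → M) → M, DefTerm F ∧ ∀ v, (∃! y, R v y) → R v (F v) := by
  classical
  refine ⟨fun v => if h : ∃! y, R v y then h.choose else zeroM M, ?_, fun v hv => ?_⟩
  · have hR' : DefPred fun w : Fin (n + 2) → M => R (fun i => w i.succ.succ) (w 0) := by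
      have := hR.reindex (Fin.cons 0 fun i => i.succ.succ : Fin (n + 1) → Fin (n + 2))
      simpa using this
    have hR'' : DefPred fun w : Fin (n + 3) → M => R (fun i => w i.succ.succ.succ) (w 0) := by
      have := hR.reindex (Fin.cons 0 fun i => i.succ.succ.succ : Fin (n + 1) → Fin (n + 3))
      simpa using this
    have hU : DefPred fun w : Fin (n + 1) → M => ∃! y, R (fun i => w i.succ) y :=
      DefPred.exists (Q := fun w y => R (fun i => w i.succ) y ∧
        ∀ z, R (fun i => w i.succ) z → z = y) <|
        hR'.and <| DefPred.forall (Q := fun w z => R (fun i => w i.succ.succ) z → z = w 0) <|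
          hR''.imp (DefPred.eq (defTerm_var _) (defTerm_var _))
    have := (hU.and hR).or (hU.not.and (DefPred.eq (defTerm_var 0) (defTerm_const (zeroM M))))
    refine this.congr fun w => ?_
    dsimp only
    split_ifs with h
    · simp only [h, true_and, not_true_eq_false, false_and, or_false]
      exact ⟨fun hw => h.unique hw h.choose_spec.1, fun hw => hw ▸ h.choose_spec.1⟩
    · simp [h]
  · simp only [hv, dite_true]
    exact hv.choose_spec.1

end Definability

end Arith

namespace Arith

section Numerals

variable {M : Type*} [arith.Structure M]

namespace IsPAModel

theorem lt_zero (hM : IsPAModel M) (x : M) : ¬ ltM x (zeroM M) := hM.2.2.2.2.1 x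

theorem lt_succ (hM : IsPAModel M) (x y : M) :
    ltM x (addM y (oneM M)) ↔ ltM x y ∨ x = y := hM.2.2.2.2.2.1 x y

theorem succ_ne_zero (hM : IsPAModel M) (x : M) : addM x (oneM M) ≠ zeroM M := hM.2.2.2.2.2.2.1 x

theorem succ_inj (hM : IsPAModel M) {x y : M} (h : addM x (oneM M) = addM y (oneM M)) : x = y :=
  hM.2.2.2.2.2.2.2.1 x y h

theorem induction (hM : IsPAModel M) {P : M → Prop} (hP : DefPred fun v : Fin 1 → M => P (v 0))
    (zero : P (zeroM M)) (succ : ∀ x, P x → P (addM x (oneM M))) (x : M) : P x :=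
  hM.2.2.2.2.2.2.2.2 {x | P x} hP zero succ x

theorem eq_zero_or_eq_succ (hM : IsPAModel M) (x : M) : x = zeroM M ∨ ∃ y, x = addM y (oneM M) :=
  hM.induction (P := fun x => x = zeroM M ∨ ∃ y, x = addM y (oneM M))
    (.or (.eq (defTerm_var 0) (defTerm_const _)) <|
      .exists <| .eq (defTerm_var _) (.add (defTerm_var 0) (defTerm_const _)))
    (.inl rfl) (fun x _ => .inr ⟨x, rfl⟩) x

theorem numeral_add (hM : IsPAModel M) (m n : ℕ) :
    addM (numeral M m) (numeral M n) = numeral M (m + n) := by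
  induction n with
  | zero => exact hM.1 _
  | succ n ih => rw [numeral, hM.2.1, ih]; rfl

theorem numeral_mul (hM : IsPAModel M) (m n : ℕ) :
    mulM (numeral M m) (numeral M n) = numeral M (m * n) := by
  induction n with
  | zero => exact hM.2.2.1 _
  | succ n ih => rw [numeral, hM.2.2.2.1, ih, hM.numeral_add]; rfl

theorem numeral_injective (hM : IsPAModel M) : Function.Injective (numeral M) := by
  intro m
  induction m with
  | zero =>
    rintro (_ | n) h
    · rfl
    · exact absurd h.symm (hM.succ_ne_zero _)
  | succ m ih =>
    rintro (_ | n) h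
    · exact absurd h (hM.succ_ne_zero _)
    · rw [ih (hM.succ_inj h)]

theorem lt_numeral_iff (hM : IsPAModel M) {x : M} {n : ℕ} :
    ltM x (numeral M n) ↔ ∃ j < n, x = numeral M j := by
  induction n with
  | zero => simpa [numeral] using hM.lt_zero x
  | succ n ih =>
    rw [numeral, hM.lt_succ, ih]
    constructor
    · rintro (⟨j, hj, rfl⟩ | rfl)
      exacts [⟨j, by omega, rfl⟩, ⟨n, by omega, rfl⟩]
    · rintro ⟨j, hj, rfl⟩
      rcases Nat.lt_succ_iff_lt_or_eq.1 hj with h | rfl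
      exacts [.inl ⟨j, h, rfl⟩, .inr rfl]

theorem numeral_lt_numeral (hM : IsPAModel M) {m n : ℕ} :
    ltM (numeral M m) (numeral M n) ↔ m < n := by
  rw [hM.lt_numeral_iff]
  constructor
  · rintro ⟨j, hj, h⟩
    rwa [hM.numeral_injective h]
  · exact fun h => ⟨m, h, rfl⟩

theorem numeral_lt_of_not_isStd (hM : IsPAModel M) {y : M} (hy : ¬ IsStd y) (n : ℕ) :
    ltM (numeral M n) y := by
  have key : ltM (numeral M n) y ∨ ltM y (numeral M (n + 1)) := by
    refine hM.induction (P := fun y => ltM (numeral M n) y ∨ ltM y (numeral M (n + 1)))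
      (.or (.lt (defTerm_const _) (defTerm_var 0)) (.lt (defTerm_var 0) (defTerm_const _)))
      (.inr (hM.numeral_lt_numeral.2 n.succ_pos)) (fun x hx => ?_) y
    rcases hx with hx | hx
    · exact .inl ((hM.lt_succ _ _).2 (.inl hx))
    · obtain ⟨j, hj, rfl⟩ := hM.lt_numeral_iff.1 hx
      change ltM _ (numeral M (j + 1)) ∨ ltM (numeral M (j + 1)) _
      simp only [hM.numeral_lt_numeral]
      omega
  refine key.resolve_right fun h => hy ?_
  obtain ⟨j, -, rfl⟩ := hM.lt_numeral_iff.1 h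
  exact ⟨j, rfl⟩

theorem isStd_right_of_add (hM : IsPAModel M) {x y : M} {n : ℕ} (h : addM x y = numeral M n) :
    IsStd y := by
  induction n generalizing y with
  | zero =>
    rcases hM.eq_zero_or_eq_succ y with rfl | ⟨y, rfl⟩
    · exact ⟨0, rfl⟩
    · rw [hM.2.1] at h
      exact absurd h (hM.succ_ne_zero _)
  | succ n ih =>
    rcases hM.eq_zero_or_eq_succ y with rfl | ⟨y, rfl⟩
    · exact ⟨0, rfl⟩
    · rw [hM.2.1] at h
      obtain ⟨j, rfl⟩ := ih (hM.succ_inj h)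
      exact ⟨j + 1, rfl⟩

theorem isStd_left_of_add (hM : IsPAModel M) {x : M} {m n : ℕ}
    (h : addM x (numeral M m) = numeral M n) :
    IsStd x := by
  induction m generalizing n with
  | zero => exact ⟨n, by rw [← h]; exact (hM.1 x).symm⟩
  | succ m ih =>
    rw [numeral, hM.2.1] at h
    cases n with
    | zero => exact absurd h (hM.succ_ne_zero _)
    | succ n => exact ih (hM.succ_inj h)

theorem digitB_numeral (hM : IsPAModel M) (n i : ℕ) : digitB (numeral M n) i ↔ n.testBit i := by
  have hbit : n.testBit i ↔ ∃ u v, n = u * 2 ^ (i + 1) + (2 ^ i + v) ∧ v < 2 ^ i := by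
    rw [Nat.testBit_eq_decide_div_mod_eq, decide_eq_true_iff]
    have hpos : 0 < 2 ^ i := by positivity
    constructor
    · intro h
      refine ⟨n / 2 ^ i / 2, n % 2 ^ i, ?_, Nat.mod_lt _ hpos⟩
      have h1 := Nat.div_add_mod n (2 ^ i)
      have h2 := Nat.div_add_mod (n / 2 ^ i) 2
      rw [h] at h2
      generalize n / 2 ^ i / 2 = q at *
      rw [← h2] at h1
      rw [pow_succ]
      linarith
    · rintro ⟨u, v, rfl, hv⟩
      rw [show u * 2 ^ (i + 1) + (2 ^ i + v) = v + 2 ^ i * (2 * u + 1) by ring,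
        Nat.add_mul_div_left _ _ hpos, Nat.div_eq_of_lt hv]
      omega
  rw [hbit]
  constructor
  · rintro ⟨u, v, h, hv⟩
    obtain ⟨v, hv', rfl⟩ := hM.lt_numeral_iff.1 hv
    rw [hM.numeral_add] at h
    obtain ⟨w, hw⟩ := hM.isStd_left_of_add h.symm
    obtain ⟨N, hN⟩ : ∃ N, 2 ^ (i + 1) = N + 1 := ⟨2 ^ (i + 1) - 1, by
      have : 0 < 2 ^ (i + 1) := by positivity
      omega⟩
    obtain ⟨u, rfl⟩ : IsStd u := by
      rw [hN, numeral, hM.2.2.2.1] at hw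
      exact hM.isStd_right_of_add hw
    rw [hM.numeral_mul, hM.numeral_add] at h
    exact ⟨u, v, hM.numeral_injective h, hv'⟩
  · rintro ⟨u, v, rfl, hv⟩
    refine ⟨numeral M u, numeral M v, ?_, hM.numeral_lt_numeral.2 hv⟩
    rw [hM.numeral_mul, hM.numeral_add, hM.numeral_add]

/-- Overspill: a definable predicate that holds of every numeral holds of a nonstandard element. -/
theorem overspill (hM : IsPAModel M) {a : M} (ha : ¬ IsStd a) {P : M → Prop}
    (hP : DefPred fun v : Fin 1 → M => P (v 0)) (h : ∀ n, P (numeral M n)) :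
    ∃ m, ¬ IsStd m ∧ P m := by
  by_contra! hc
  have hstd : ∀ x, P x → IsStd x := fun x hx => by_contra fun hx' => hc x hx' hx
  refine ha (hstd a (hM.induction hP (h 0) (fun x hx => ?_) a))
  obtain ⟨n, rfl⟩ := hstd x hx
  exact h (n + 1)

end IsPAModel

end Numerals

section Traces

variable {M : Type*} [arith.Structure M] {n m : ℕ}

variable (M) in
/-- `P` is the restriction to numerals of a definable predicate on `M`. -/
def TracePred (P : (Fin n → ℕ) → Prop) : Prop :=
  ∃ Q : (Fin n → M) → Prop, DefPred Q ∧ ∀ v, Q (fun i => numeral M (v i)) ↔ P v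

variable (M) in
/-- `f` is the restriction to numerals of a definable function on `M`. -/
def TraceFun (f : (Fin n → ℕ) → ℕ) : Prop :=
  ∃ F : (Fin n → M) → M, DefTerm F ∧ ∀ v, F (fun i => numeral M (v i)) = numeral M (f v)

theorem TracePred.and {P Q : (Fin n → ℕ) → Prop} (hP : TracePred M P) (hQ : TracePred M Q) :
    TracePred M fun v => P v ∧ Q v := by
  obtain ⟨P', hP', hP⟩ := hP
  obtain ⟨Q', hQ', hQ⟩ := hQ
  exact ⟨_, hP'.and hQ', fun v => and_congr (hP v) (hQ v)⟩

theorem TracePred.not {P : (Fin n → ℕ) → Prop} (hP : TracePred M P) :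
    TracePred M fun v => ¬ P v := by
  obtain ⟨P', hP', hP⟩ := hP
  exact ⟨_, hP'.not, fun v => not_congr (hP v)⟩

theorem TracePred.or {P Q : (Fin n → ℕ) → Prop} (hP : TracePred M P) (hQ : TracePred M Q) :
    TracePred M fun v => P v ∨ Q v := by
  obtain ⟨P', hP', hP⟩ := hP
  obtain ⟨Q', hQ', hQ⟩ := hQ
  exact ⟨_, hP'.or hQ', fun v => or_congr (hP v) (hQ v)⟩

theorem traceFun_var (i : Fin n) : TraceFun M fun v => v i :=
  ⟨_, defTerm_var i, fun _ => rfl⟩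

theorem traceFun_const (c : ℕ) : TraceFun M fun _ : Fin n → ℕ => c :=
  ⟨_, defTerm_const (numeral M c), fun _ => rfl⟩

theorem TraceFun.subst {s : (Fin n → ℕ) → ℕ} (hs : TraceFun M s)
    {t : Fin n → (Fin m → ℕ) → ℕ} (ht : ∀ i, TraceFun M (t i)) :
    TraceFun M fun v => s fun i => t i v := by
  obtain ⟨S, hS, hs⟩ := hs
  choose T hT ht using ht
  exact ⟨_, hS.subst hT, fun v => by simp only [ht, hs]⟩

theorem TraceFun.subst₁ {g : ℕ → ℕ} (hg : TraceFun M fun w : Fin 1 → ℕ => g (w 0))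
    {t : (Fin n → ℕ) → ℕ} (ht : TraceFun M t) : TraceFun M fun v => g (t v) :=
  hg.subst (t := fun _ => t) fun _ => ht

theorem TraceFun.subst₂ {g : ℕ → ℕ → ℕ} (hg : TraceFun M fun w : Fin 2 → ℕ => g (w 0) (w 1))
    {s t : (Fin n → ℕ) → ℕ} (hs : TraceFun M s) (ht : TraceFun M t) :
    TraceFun M fun v => g (s v) (t v) := by
  simpa using TraceFun.subst hg (t := ![s, t]) (by intro i; fin_cases i; exacts [hs, ht])

namespace IsPAModel

theorem traceFun_add (hM : IsPAModel M) {s t : (Fin n → ℕ) → ℕ} (hs : TraceFun M s)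
    (ht : TraceFun M t) :
    TraceFun M fun v => s v + t v := by
  obtain ⟨S, hS, hs⟩ := hs
  obtain ⟨T, hT, ht⟩ := ht
  exact ⟨_, hS.add hT, fun v => by rw [hs, ht, hM.numeral_add]⟩

theorem traceFun_mul (hM : IsPAModel M) {s t : (Fin n → ℕ) → ℕ} (hs : TraceFun M s)
    (ht : TraceFun M t) :
    TraceFun M fun v => s v * t v := by
  obtain ⟨S, hS, hs⟩ := hs
  obtain ⟨T, hT, ht⟩ := ht
  exact ⟨_, hS.mul hT, fun v => by rw [hs, ht, hM.numeral_mul]⟩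

theorem tracePred_lt (hM : IsPAModel M) {s t : (Fin n → ℕ) → ℕ} (hs : TraceFun M s)
    (ht : TraceFun M t) :
    TracePred M fun v => s v < t v := by
  obtain ⟨S, hS, hs⟩ := hs
  obtain ⟨T, hT, ht⟩ := ht
  exact ⟨_, DefPred.lt hS hT, fun v => by rw [hs, ht, hM.numeral_lt_numeral]⟩

theorem tracePred_eq (hM : IsPAModel M) {s t : (Fin n → ℕ) → ℕ} (hs : TraceFun M s)
    (ht : TraceFun M t) :
    TracePred M fun v => s v = t v := by
  obtain ⟨S, hS, hs⟩ := hs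
  obtain ⟨T, hT, ht⟩ := ht
  exact ⟨_, DefPred.eq hS hT, fun v => by rw [hs, ht, hM.numeral_injective.eq_iff]⟩

theorem tracePred_bex (hM : IsPAModel M) {Q : (Fin n → ℕ) → ℕ → Prop} {t : (Fin n → ℕ) → ℕ}
    (ht : TraceFun M t)
    (hQ : TracePred M fun w : Fin (n + 1) → ℕ => Q (fun i => w i.succ) (w 0)) :
    TracePred M fun v => ∃ y < t v, Q v y := by
  obtain ⟨T, hT, ht⟩ := ht
  obtain ⟨Q', hQ', hQ⟩ := hQ
  refine ⟨fun v => ∃ y, ltM y (T v) ∧ Q' (Fin.cons y v), ?_, fun v => ?_⟩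
  · refine DefPred.exists (.and (.lt (defTerm_var 0) (hT.reindex Fin.succ)) ?_)
    refine hQ'.congr fun w => ?_
    rw [show (Fin.cons (w 0) fun i => w i.succ : Fin (n + 1) → M) = w from Fin.cons_self_tail w]
  · have key : ∀ j, Q' (Fin.cons (numeral M j) fun i => numeral M (v i)) ↔ Q v j := fun j => by
      have := hQ (Fin.cons j v : Fin (n + 1) → ℕ)
      simp only [Fin.cons_succ, Fin.cons_zero] at this
      rw [← this]
      refine iff_of_eq (congrArg _ (funext fun i => ?_))
      refine Fin.cases ?_ (fun i => ?_) i <;> simp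
    dsimp only
    rw [ht]
    constructor
    · rintro ⟨y, hy, h⟩
      obtain ⟨j, hj, rfl⟩ := hM.lt_numeral_iff.1 hy
      exact ⟨j, hj, (key j).1 h⟩
    · rintro ⟨j, hj, h⟩
      exact ⟨_, hM.numeral_lt_numeral.2 hj, (key j).2 h⟩

theorem tracePred_ball (hM : IsPAModel M) {Q : (Fin n → ℕ) → ℕ → Prop} {t : (Fin n → ℕ) → ℕ}
    (ht : TraceFun M t)
    (hQ : TracePred M fun w : Fin (n + 1) → ℕ => Q (fun i => w i.succ) (w 0)) :
    TracePred M fun v => ∀ y < t v, Q v y := by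
  simpa using (hM.tracePred_bex (Q := fun v y => ¬ Q v y) ht hQ.not).not

/-- Traces of definable functions are closed under total minimization. -/
theorem traceFun_min (hM : IsPAModel M) {Q : (Fin n → ℕ) → ℕ → Prop} {f : (Fin n → ℕ) → ℕ}
    (hQ : TracePred M fun w : Fin (n + 1) → ℕ => Q (fun i => w i.succ) (w 0))
    (hf : ∀ v, Q v (f v)) (hmin : ∀ v y, Q v y → f v ≤ y) : TraceFun M f := by
  obtain ⟨Q', hQ', hQ⟩ := hQ
  have key : ∀ v j, Q' (Fin.cons (numeral M j) fun i => numeral M (v i)) ↔ Q v j := fun v j => by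
    have := hQ (Fin.cons j v : Fin (n + 1) → ℕ)
    simp only [Fin.cons_succ, Fin.cons_zero] at this
    rw [← this]
    refine iff_of_eq (congrArg _ (funext fun i => ?_))
    refine Fin.cases ?_ (fun i => ?_) i <;> simp
  obtain ⟨F, hF, hFR⟩ := exists_defTerm_of_existsUnique
    (R := fun (v : Fin n → M) y => Q' (Fin.cons y v) ∧ ∀ z, ltM z y → ¬ Q' (Fin.cons z v)) (by
      refine .and (hQ'.congr fun w => ?_) (.forall (.imp (.lt (defTerm_var _) (defTerm_var _))
        (.not ((hQ'.reindex (Fin.cons 0 fun i => i.succ.succ)).congr fun w => ?_))))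
      · rw [show (Fin.cons (w 0) fun i => w i.succ : Fin (n + 1) → M) = w
          from Fin.cons_self_tail w]
      · refine iff_of_eq (congrArg _ (funext fun i => ?_))
        refine Fin.cases ?_ (fun i => ?_) i <;> simp)
  refine ⟨F, hF, fun v => ?_⟩
  have huniq : ∀ y, (Q' (Fin.cons y fun i => numeral M (v i)) ∧
      ∀ z, ltM z y → ¬ Q' (Fin.cons z fun i => numeral M (v i))) → y = numeral M (f v) := by
    rintro y ⟨hy, hlt⟩
    by_cases hstd : IsStd y
    · obtain ⟨j, rfl⟩ := hstd
      have hle := hmin v j ((key v j).1 hy)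
      rcases hle.lt_or_eq with h | h
      · exact absurd ((key v _).2 (hf v)) (hlt _ (hM.numeral_lt_numeral.2 h))
      · rw [h]
    · exact absurd ((key v _).2 (hf v)) (hlt _ (hM.numeral_lt_of_not_isStd hstd _))
  refine huniq _ (hFR _ ⟨numeral M (f v), ⟨(key v _).2 (hf v), fun z hz hQz => ?_⟩, huniq⟩)
  obtain ⟨j, hj, rfl⟩ := hM.lt_numeral_iff.1 hz
  exact absurd (hmin v j ((key v j).1 hQz)) (by omega)

theorem traceFun_of_graph (hM : IsPAModel M) {f : (Fin n → ℕ) → ℕ}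
    (h : TracePred M fun w : Fin (n + 1) → ℕ => w 0 = f fun i => w i.succ) : TraceFun M f :=
  hM.traceFun_min (Q := fun v y => y = f v) h (fun _ => rfl) fun _ _ h => h.ge

theorem traceFun_pair (hM : IsPAModel M) {s t : (Fin n → ℕ) → ℕ} (hs : TraceFun M s)
    (ht : TraceFun M t) :
    TraceFun M fun v => Nat.pair (s v) (t v) := by
  refine TraceFun.subst₂ (g := Nat.pair) (hM.traceFun_of_graph ?_) hs ht
  have := ((hM.tracePred_lt (M := M) (traceFun_var (1 : Fin 3)) (traceFun_var 2)).and
    (hM.tracePred_eq (traceFun_var 0) (hM.traceFun_add (hM.traceFun_mul (traceFun_var 2)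
      (traceFun_var 2)) (traceFun_var 1)))).or
    ((hM.tracePred_lt (M := M) (traceFun_var (1 : Fin 3)) (traceFun_var 2)).not.and
    (hM.tracePred_eq (traceFun_var 0) (hM.traceFun_add (hM.traceFun_add (hM.traceFun_mul
      (traceFun_var 1) (traceFun_var 1)) (traceFun_var 1)) (traceFun_var 2))))
  convert this using 2 with w
  simp only [Nat.pair, Fin.isValue, Fin.succ_zero_eq_one, Fin.succ_one_eq_two]
  split_ifs with h <;> simp [h]

theorem traceFun_unpair_fst (hM : IsPAModel M) {t : (Fin n → ℕ) → ℕ} (ht : TraceFun M t) :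
    TraceFun M fun v => (Nat.unpair (t v)).1 := by
  refine TraceFun.subst₁ (g := fun x => (Nat.unpair x).1) (hM.traceFun_min
    (Q := fun v y => ∃ z < v 0 + 1, v 0 = Nat.pair y z) ?_ (fun v => ?_) ?_) ht
  · exact hM.tracePred_bex (Q := fun w z => w 1 = Nat.pair (w 0) z)
      (hM.traceFun_add (traceFun_var _) (traceFun_const 1))
      (hM.tracePred_eq (traceFun_var _) (hM.traceFun_pair (traceFun_var _) (traceFun_var _)))
  · exact ⟨_, Nat.lt_succ_of_le (Nat.unpair_right_le _), (Nat.pair_unpair _).symm⟩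
  · rintro v y ⟨z, -, h⟩
    simp [h]

theorem traceFun_unpair_snd (hM : IsPAModel M) {t : (Fin n → ℕ) → ℕ} (ht : TraceFun M t) :
    TraceFun M fun v => (Nat.unpair (t v)).2 := by
  refine TraceFun.subst₁ (g := fun x => (Nat.unpair x).2) (hM.traceFun_of_graph ?_) ht
  convert hM.tracePred_eq (M := M) (traceFun_var (1 : Fin 2)) (hM.traceFun_pair
    (hM.traceFun_unpair_fst (traceFun_var 1)) (traceFun_var 0)) using 2 with w
  simp only [Fin.isValue, Fin.succ_zero_eq_one]
  constructor
  · intro h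
    rw [h, Nat.pair_unpair]
  · intro h
    simpa using congrArg (fun x => (Nat.unpair x).2) h.symm

theorem traceFun_mod (hM : IsPAModel M) {s t : (Fin n → ℕ) → ℕ} (hs : TraceFun M s)
    (ht : TraceFun M t) :
    TraceFun M fun v => s v % (t v + 1) := by
  refine TraceFun.subst₂ (g := fun x y => x % (y + 1)) (hM.traceFun_min
    (Q := fun v r => ∃ q < v 0 + 1, v 0 = (v 1 + 1) * q + r) ?_ (fun v => ?_) ?_) hs ht
  · exact hM.tracePred_bex (Q := fun w q => w 1 = (w 2 + 1) * q + w 0)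
      (hM.traceFun_add (traceFun_var _) (traceFun_const 1))
      (hM.tracePred_eq (traceFun_var _) (hM.traceFun_add (hM.traceFun_mul
        (hM.traceFun_add (traceFun_var _) (traceFun_const 1)) (traceFun_var _)) (traceFun_var _)))
  · exact ⟨v 0 / (v 1 + 1), Nat.lt_succ_of_le (Nat.div_le_self _ _), (Nat.div_add_mod _ _).symm⟩
  · rintro v r ⟨q, -, h⟩
    simp only [h, Nat.mul_add_mod]
    exact Nat.mod_le _ _

theorem traceFun_beta (hM : IsPAModel M) {s t : (Fin n → ℕ) → ℕ} (hs : TraceFun M s)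
    (ht : TraceFun M t) :
    TraceFun M fun v => Nat.beta (s v) (t v) :=
  hM.traceFun_mod (hM.traceFun_unpair_fst hs) (hM.traceFun_mul
    (hM.traceFun_add ht (traceFun_const 1)) (hM.traceFun_unpair_snd hs))

theorem traceFun_prec (hM : IsPAModel M) {f g : ℕ → ℕ}
    (hf : TraceFun M fun v : Fin 1 → ℕ => f (v 0))
    (hg : TraceFun M fun v : Fin 1 → ℕ => g (v 0)) :
    TraceFun M fun v : Fin 1 → ℕ => Nat.unpaired
      (fun z n => n.rec (f z) fun y IH => g (Nat.pair z (Nat.pair y IH))) (v 0) := by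
  classical
  let r : ℕ → ℕ → ℕ := fun z n => n.rec (f z) fun y IH => g (Nat.pair z (Nat.pair y IH))
  let Q : (Fin 2 → ℕ) → ℕ → Prop := fun v s => Nat.beta s 0 = f (v 0) ∧
    ∀ i < v 1, Nat.beta s (i + 1) = g (Nat.pair (v 0) (Nat.pair i (Nat.beta s i)))
  have hQ : ∀ v, ∃ s, Q v s := fun v => by
    have hbeta : ∀ i ≤ v 1,
        Nat.beta (Nat.unbeta ((List.range (v 1 + 1)).map (r (v 0)))) i = r (v 0) i :=
      fun i hi => by
        have := Nat.beta_unbeta_coe ((List.range (v 1 + 1)).map (r (v 0)))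
          ⟨i, by simpa using Nat.lt_succ_of_le hi⟩
        simpa using this
    refine ⟨Nat.unbeta ((List.range (v 1 + 1)).map (r (v 0))), hbeta 0 (Nat.zero_le _), ?_⟩
    intro i hi
    rw [hbeta (i + 1) hi, hbeta i hi.le]
  have hval : ∀ v s, Q v s → ∀ i ≤ v 1, Nat.beta s i = r (v 0) i := by
    rintro v s ⟨h0, hs⟩ i
    induction i with
    | zero => exact fun _ => h0
    | succ i ih => exact fun hi => by rw [hs i hi, ih (by omega)]
  have hs : TraceFun M fun v => Nat.find (hQ v) := by
    refine hM.traceFun_min (Q := Q) (.and ?_ ?_) (fun v => Nat.find_spec (hQ v))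
      fun v y hy => Nat.find_min' (hQ v) hy
    · exact hM.tracePred_eq (hM.traceFun_beta (traceFun_var _) (traceFun_const 0))
        (hf.subst₁ (traceFun_var _))
    · refine hM.tracePred_ball (Q := fun w i => Nat.beta (w 0) (i + 1) =
        g (Nat.pair (w 1) (Nat.pair i (Nat.beta (w 0) i)))) (traceFun_var _) ?_
      exact hM.tracePred_eq (hM.traceFun_beta (traceFun_var _) (hM.traceFun_add (traceFun_var _)
        (traceFun_const 1))) (hg.subst₁ (hM.traceFun_pair (traceFun_var _) (hM.traceFun_pair
          (traceFun_var _) (hM.traceFun_beta (traceFun_var _) (traceFun_var _)))))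
  have hr : TraceFun M fun v : Fin 2 → ℕ => r (v 0) (v 1) := by
    have := hM.traceFun_beta hs (traceFun_var 1)
    refine (congrArg _ (funext fun v => ?_)).mp this
    exact hval v _ (Nat.find_spec (hQ v)) _ le_rfl
  exact TraceFun.subst₂ hr (hM.traceFun_unpair_fst (traceFun_var 0))
    (hM.traceFun_unpair_snd (traceFun_var 0))

theorem traceFun_of_natPrimrec (hM : IsPAModel M) {f : ℕ → ℕ} (hf : Nat.Primrec f) :
    TraceFun M fun v : Fin 1 → ℕ => f (v 0) := by
  induction hf with
  | zero => exact traceFun_const 0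
  | succ => exact hM.traceFun_add (traceFun_var 0) (traceFun_const 1)
  | left => exact hM.traceFun_unpair_fst (traceFun_var 0)
  | right => exact hM.traceFun_unpair_snd (traceFun_var 0)
  | pair _ _ hf hg => exact hM.traceFun_pair hf hg
  | comp _ _ hf hg => exact hf.subst₁ hg
  | prec _ _ hf hg => exact hM.traceFun_prec hf hg

/-- Every primitive recursive function extends to a definable function on `M`. -/
theorem exists_defTerm_of_primrec (hM : IsPAModel M) {f : ℕ → ℕ} (hf : Primrec f) :
    ∃ F : M → M, (∀ {n : ℕ} {t : (Fin n → M) → M}, DefTerm t → DefTerm fun v => F (t v)) ∧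
      ∀ x, F (numeral M x) = numeral M (f x) := by
  obtain ⟨F, hF, h⟩ := hM.traceFun_of_natPrimrec (Primrec.nat_iff.1 hf)
  exact ⟨fun x => F fun _ => x, fun ht => hF.subst fun _ => ht, fun x => h fun _ => x⟩

/-- Every binary primitive recursive function extends to a definable function on `M`. -/
theorem exists_defTerm_of_primrec₂ (hM : IsPAModel M) {f : ℕ → ℕ → ℕ} (hf : Primrec₂ f) :
    ∃ F : M → M → M, (∀ {n : ℕ} {s t : (Fin n → M) → M}, DefTerm s → DefTerm t →
      DefTerm fun v => F (s v) (t v)) ∧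
      ∀ x y, F (numeral M x) (numeral M y) = numeral M (f x y) := by
  have hu := TraceFun.subst₁ (hM.traceFun_of_natPrimrec (Primrec.nat_iff.1 (Primrec₂.unpaired.2 hf)))
    (hM.traceFun_pair (M := M) (traceFun_var (0 : Fin 2)) (traceFun_var 1))
  obtain ⟨F, hF, h⟩ := hu
  refine ⟨fun x y => F ![x, y], fun {n s t} hs ht => ?_, fun x y => ?_⟩
  · have := hF.subst (t := ![s, t]) (by intro i; fin_cases i; exacts [hs, ht])
    refine (congrArg _ (funext fun v => congrArg _ (funext fun i => ?_))).mp this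
    fin_cases i <;> rfl
  · have := h ![x, y]
    simp only [Nat.unpaired, Nat.unpair_pair] at this
    refine Eq.trans (congrArg _ (funext fun i => ?_)) this
    fin_cases i <;> rfl

end IsPAModel

end Traces

end Arith

namespace Arith

section StandardSystem

variable {M : Type*} [arith.Structure M]

theorem exists_testBit_iff (S : Set ℕ) (m : ℕ) :
    ∃ y, m ≤ y ∧ ∀ i < m, y.testBit i ↔ i ∈ S := by
  classical
  let g : Fin (m + 1) → Bool := fun i => decide (i.val = m ∨ i.val ∈ S)
  refine ⟨Nat.ofBits g, ?_, fun i hi => ?_⟩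
  · have : (Nat.ofBits g).testBit m := by
      rw [Nat.testBit_ofBits_lt g m (Nat.lt_succ_self m)]
      simp [g]
    exact (Nat.lt_two_pow_self).le.trans (Nat.ge_two_pow_of_testBit this)
  · rw [Nat.testBit_ofBits_lt g i (by omega)]
    simp [g, hi.ne]

namespace IsPAModel

/-- The binary digit relation extends to a definable relation with nonstandard positions. -/
theorem exists_defPred_digit (hM : IsPAModel M) : ∃ D : M → M → Prop,
    (∀ {n : ℕ} {s t : (Fin n → M) → M}, DefTerm s → DefTerm t →
      DefPred fun v => D (s v) (t v)) ∧
    ∀ y i, D y (numeral M i) ↔ digitB y i := by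
  have hpow : Primrec fun n : ℕ => 2 ^ n := by
    refine (Primrec.nat_rec₁ (f := fun _ r => 2 * r) 1
      (Primrec.nat_double.comp Primrec.snd)).of_eq fun n => ?_
    induction n with
    | zero => rfl
    | succ n ih => rw [pow_succ, mul_comm, ← ih]
  obtain ⟨E, hE, hE'⟩ := hM.exists_defTerm_of_primrec hpow
  refine ⟨fun y i => ∃ u v, y = addM (mulM u (E (addM i (oneM M)))) (addM (E i) v) ∧ ltM v (E i),
    fun {n s t} hs ht => ?_, fun y i => ?_⟩
  · have hs' := hs.reindex fun i => i.succ.succ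
    have ht' := ht.reindex fun i => i.succ.succ
    exact .exists <| .exists <| .and
      (.eq hs' (.add (.mul (defTerm_var _) (hE (.add ht' (defTerm_const _))))
        (.add (hE ht') (defTerm_var _))))
      (.lt (defTerm_var _) (hE ht'))
  · rw [digitB, ← hE', ← hE']
    rfl

/-- The trace on the numerals of a definable set belongs to the standard system. -/
theorem trace_mem_SSy (hM : IsPAModel M) {a : M} (ha : ¬ IsStd a) {A : M → Prop}
    (hA : DefPred fun v : Fin 1 → M => A (v 0)) : {i | A (numeral M i)} ∈ SSy M := by
  obtain ⟨D, hD, hD'⟩ := hM.exists_defPred_digit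
  obtain ⟨m, hm, y, hym, hy⟩ := hM.overspill ha
    (P := fun m => ∃ y, ¬ ltM y m ∧ ∀ i, ltM i m → (D y i ↔ A i))
    (.exists <| .and (.not (.lt (defTerm_var 0) (defTerm_var 1))) <|
      .forall <| .imp (.lt (defTerm_var 0) (defTerm_var 2))
        (.iff (hD (defTerm_var 1) (defTerm_var 0)) (hA.reindex fun _ => 0)))
    (fun m => by
      obtain ⟨y, hmy, hy⟩ := exists_testBit_iff {i | A (numeral M i)} m
      refine ⟨numeral M y, by rw [hM.numeral_lt_numeral]; omega, fun i hi => ?_⟩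
      obtain ⟨j, hj, rfl⟩ := hM.lt_numeral_iff.1 hi
      rw [hD', hM.digitB_numeral]
      exact hy j hj)
  refine ⟨y, ?_, fun i => ?_⟩
  · rintro ⟨j, rfl⟩
    exact hym (hM.numeral_lt_of_not_isStd hm j)
  · rw [← hD']
    exact (hy _ (hM.numeral_lt_of_not_isStd hm i)).symm

theorem tree_mem_SSy (hM : IsPAModel M) {a d : M} (ha : ¬ IsStd a) {k : ℕ} {f : Fin (k + 2) → M → M}
    (hf : ∀ i, DefinableFun₁ (f i)) :
    {x | ∃ l : List (List Bool), x = Encodable.encode l ∧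
      l.length = k + 2 ∧ (∀ s ∈ l, s.length = (l.headD []).length) ∧
      ∃ c : M, ltM c d ∧ ∀ (i : Fin (k + 2)), ∀ n < (l.getD i.val []).length,
        (digitB (f i c) n ↔ (l.getD i.val []).getD n false = true)} ∈ SSy M := by
  obtain ⟨D, hD, hD'⟩ := hM.exists_defPred_digit
  let dec : ℕ → List (List Bool) := fun x => (Encodable.decode x).getD []
  have hdec : Primrec dec := Primrec.option_getD.comp Primrec.decode (Primrec.const [])
  have hdec_encode : ∀ l, dec (Encodable.encode l) = l := fun l => by simp [dec]
  let valid : ℕ → ℕ := fun x =>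
    if Encodable.encode (dec x) = x ∧ (dec x).length = k + 2 then 1 else 0
  have hvalid : Primrec valid := Primrec.ite
    ((Primrec.eq.comp (Primrec.encode.comp hdec) Primrec.id).and
      (Primrec.eq.comp (Primrec.list_length.comp hdec) (Primrec.const (k + 2))))
    (Primrec.const 1) (Primrec.const 0)
  have hrow : ∀ i : ℕ, Primrec fun x => (dec x).getD i [] := fun i =>
    (Primrec.list_getD []).comp hdec (Primrec.const i)
  let bit : ℕ → ℕ → ℕ → ℕ := fun i x n => if ((dec x).getD i []).getD n false = true then 1 else 0
  have hbit : ∀ i, Primrec₂ (bit i) := fun i => Primrec.ite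
    (Primrec.eq.comp ((Primrec.list_getD false).comp ((hrow i).comp Primrec.fst) Primrec.snd)
      (Primrec.const true)) (Primrec.const 1) (Primrec.const 0)
  obtain ⟨V, hV, hV'⟩ := hM.exists_defTerm_of_primrec hvalid
  choose L hL hL' using fun i : ℕ => hM.exists_defTerm_of_primrec
    (f := fun x => ((dec x).getD i []).length) (Primrec.list_length.comp (hrow i))
  choose B hB hB' using fun i : ℕ => hM.exists_defTerm_of_primrec₂ (hbit i)
  let A : M → Prop := fun x => V x = numeral M 1 ∧ (∀ i : Fin (k + 2), L i x = L 0 x) ∧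
    ∃ c, ltM c d ∧ ∀ i : Fin (k + 2), ∀ n, ltM n (L i x) → (D (f i c) n ↔ B i x n = numeral M 1)
  have hA : DefPred fun v : Fin 1 → M => A (v 0) :=
    .and (.eq (hV (defTerm_var 0)) (defTerm_const _)) <|
      .and (.forall_finite fun i => .eq (hL _ (defTerm_var 0)) (hL _ (defTerm_var 0))) <|
      .exists <| .and (.lt (defTerm_var 0) (defTerm_const d)) <| .forall_finite fun i =>
      .forall <| .imp (.lt (defTerm_var 0) (hL _ (defTerm_var 2))) <|
      .iff (hD ((hf i).defTerm (defTerm_var 1)) (defTerm_var 0))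
        (.eq (hB _ (defTerm_var 2) (defTerm_var 0)) (defTerm_const _))
  convert hM.trace_mem_SSy ha hA using 1
  ext x
  have hbody : ∀ c, (∀ i : Fin (k + 2), ∀ n, ltM n (L i (numeral M x)) →
      (D (f i c) n ↔ B i (numeral M x) n = numeral M 1)) ↔
      ∀ i : Fin (k + 2), ∀ n < ((dec x).getD i.val []).length,
        (digitB (f i c) n ↔ ((dec x).getD i.val []).getD n false = true) := fun c => by
    refine forall_congr' fun i => ⟨fun h n hn => ?_, fun h n hn => ?_⟩
    · have := h (numeral M n) (by rwa [hL', hM.numeral_lt_numeral])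
      rw [hD', hB', hM.numeral_injective.eq_iff] at this
      simpa [bit] using this
    · rw [hL'] at hn
      obtain ⟨n, hn', rfl⟩ := hM.lt_numeral_iff.1 hn
      rw [hD', hB', hM.numeral_injective.eq_iff, h n hn']
      simp [bit]
  have hAx : A (numeral M x) ↔ (Encodable.encode (dec x) = x ∧ (dec x).length = k + 2) ∧
      (∀ i : Fin (k + 2), ((dec x).getD i.val []).length = ((dec x).getD 0 []).length) ∧
      ∃ c, ltM c d ∧ ∀ i : Fin (k + 2), ∀ n < ((dec x).getD i.val []).length,
        (digitB (f i c) n ↔ ((dec x).getD i.val []).getD n false = true) := by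
    have hvx : valid x = 1 ↔ Encodable.encode (dec x) = x ∧ (dec x).length = k + 2 := by
      simp [valid]
    simp only [A, hbody]
    simp only [hV', hL', hM.numeral_injective.eq_iff, hvx]
  have hlen : ∀ l : List (List Bool), l.length = k + 2 →
      ((∀ s ∈ l, s.length = (l.headD []).length) ↔
        ∀ i : Fin (k + 2), (l.getD i.val []).length = (l.getD 0 []).length) := fun l hl => by
    have h0 : l.headD [] = l.getD 0 [] := by cases l <;> rfl
    rw [h0]
    constructor
    · intro h i
      have hi : i.val < l.length := by omega
      rw [List.getD_eq_getElem _ _ hi]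
      exact h _ (List.getElem_mem hi)
    · intro h s hs
      obtain ⟨i, hi, rfl⟩ := List.getElem_of_mem hs
      rw [← h ⟨i, by omega⟩, List.getD_eq_getElem _ _ hi]
  refine Iff.trans ?_ hAx.symm
  constructor
  · rintro ⟨l, rfl, hl, heq, h⟩
    rw [hdec_encode]
    exact ⟨⟨rfl, hl⟩, (hlen l hl).1 heq, h⟩
  · rintro ⟨⟨hx, hl⟩, heq, h⟩
    exact ⟨dec x, hx.symm, hl, (hlen _ hl).2 heq, h⟩

end IsPAModel

end StandardSystem

end Arith

namespace Arith

section Oracle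

variable {O : ℕ → ℕ} {α β γ : Type*} [Primcodable α] [Primcodable β] [Primcodable γ]

theorem RecursiveIn.of_eq {f g : ℕ →. ℕ} (hf : RecursiveIn O f) (h : ∀ n, f n = g n) :
    RecursiveIn O g :=
  (funext h : f = g) ▸ hf

theorem RecursiveIn.of_natPrimrec {f : ℕ → ℕ} (hf : Nat.Primrec f) : RecursiveIn O f := by
  induction hf with
  | zero => exact .zero
  | succ => exact .succ
  | left => exact .left
  | right => exact .right
  | pair _ _ hf hg => exact (hf.pair hg).of_eq fun n => by simp [Seq.seq]
  | comp _ _ hf hg => exact (hf.comp hg).of_eq fun n => Part.bind_some _ _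
  | prec _ _ hf hg =>
    refine (hf.prec hg).of_eq fun n => ?_
    simp only [Nat.unpaired, PFun.coe_val]
    induction n.unpair.2 with
    | zero => rfl
    | succ m ih =>
      simp only [ih]
      simp

variable (O) in
/-- A total function into an encodable type is computable from the oracle `O`. -/
def ComputableFrom (A : ℕ → α) : Prop :=
  RecursiveIn O fun n => Part.some (Encodable.encode (A n))

namespace ComputableFrom

theorem of_primrec {A : ℕ → α} (hA : Primrec A) : ComputableFrom O A :=
  RecursiveIn.of_natPrimrec (Primrec.nat_iff.1 (Primrec.encode.comp hA))

theorem comp {A : ℕ → α} {B : ℕ → ℕ} (hA : ComputableFrom O A) (hB : ComputableFrom O B) :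
    ComputableFrom O fun n => A (B n) :=
  (RecursiveIn.comp hA hB).of_eq fun n => by simp

theorem oracle {A : ℕ → ℕ} (hA : ComputableFrom O A) : ComputableFrom O fun n => O (A n) :=
  comp (A := O) RecursiveIn.oracle hA

theorem map {g : α → β} {A : ℕ → α} (hg : Primrec g) (hA : ComputableFrom O A) :
    ComputableFrom O fun n => g (A n) := by
  have hh : Primrec fun n : ℕ =>
      ((Encodable.decode n : Option α).map fun a => Encodable.encode (g a)).getD 0 :=
    Primrec.option_getD.comp (Primrec.option_map Primrec.decode
      ((Primrec.encode.comp hg).comp Primrec.snd).to₂) (Primrec.const 0)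
  exact (RecursiveIn.comp (RecursiveIn.of_natPrimrec (Primrec.nat_iff.1 hh)) hA).of_eq
    fun n => (Part.bind_some _ _).trans (by simp)

theorem map₂ {g : α → β → γ} {A : ℕ → α} {B : ℕ → β} (hg : Primrec₂ g)
    (hA : ComputableFrom O A) (hB : ComputableFrom O B) :
    ComputableFrom O fun n => g (A n) (B n) := by
  have hp : ComputableFrom O fun n => (A n, B n) :=
    (RecursiveIn.pair hA hB).of_eq fun n => by simp [Seq.seq]
  exact hp.map hg

theorem natRec {s : α → β → α} {B : ℕ → β} (a : α) (hs : Primrec₂ s)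
    (hB : ComputableFrom O B) :
    ComputableFrom O fun n => (Nat.rec a (fun y r => s r (B y)) n : α) := by
  have hstep : ComputableFrom O fun p : ℕ =>
      (((Encodable.decode p.unpair.2.unpair.2 : Option α).map fun r =>
        s r (B p.unpair.2.unpair.1)).getD a) := by
    have hg : Primrec₂ fun (p : ℕ) (b : β) =>
        ((Encodable.decode p.unpair.2.unpair.2 : Option α).map fun r => s r b).getD a :=
      Primrec.option_getD.comp (Primrec.option_map (Primrec.decode.comp
        (Primrec.snd.comp (Primrec.unpair.comp (Primrec.snd.comp (Primrec.unpair.comp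
          Primrec.fst))))) (hs.comp Primrec.snd (Primrec.snd.comp Primrec.fst)).to₂)
        (Primrec.const a)
    have hy : ComputableFrom O fun p : ℕ => B p.unpair.2.unpair.1 :=
      hB.comp (of_primrec (Primrec.fst.comp (Primrec.unpair.comp
        (Primrec.snd.comp Primrec.unpair))))
    have hpair := map₂ hg (of_primrec Primrec.id) hy
    exact hpair
  have hbase : ComputableFrom O fun _ : ℕ => a := of_primrec (Primrec.const a)
  refine ((RecursiveIn.prec hbase hstep).comp (RecursiveIn.of_natPrimrec (Primrec.nat_iff.1
    (Primrec₂.natPair.comp (Primrec.const 0) Primrec.id)))).of_eq fun n => ?_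
  simp only [PFun.coe_val, Part.bind_eq_bind, Part.bind_some, Nat.unpaired, Nat.unpair_pair, id]
  induction n with
  | zero => rfl
  | succ n ih =>
    simp only [ih]
    simp

theorem ofFn {r : ℕ} {A : Fin r → ℕ → α} (hA : ∀ i, ComputableFrom O (A i)) :
    ComputableFrom O fun n => List.ofFn fun i => A i n := by
  induction r with
  | zero => simpa using of_primrec (Primrec.const [])
  | succ r ih =>
    simp only [List.ofFn_succ]
    exact map₂ Primrec.list_cons (hA 0) (ih fun i => hA i.succ)

end ComputableFrom

theorem two_mul_mem_turingJoin {X Y : Set ℕ} {m : ℕ} : 2 * m ∈ turingJoin X Y ↔ m ∈ X := by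
  constructor
  · rintro (⟨j, hj, h⟩ | ⟨j, hj, h⟩)
    · rwa [show m = j by omega]
    · omega
  · exact fun h => .inl ⟨m, h, rfl⟩

theorem two_mul_add_one_mem_turingJoin {X Y : Set ℕ} {m : ℕ} :
    2 * m + 1 ∈ turingJoin X Y ↔ m ∈ Y := by
  constructor
  · rintro (⟨j, hj, h⟩ | ⟨j, hj, h⟩)
    · omega
    · rwa [show m = j by omega]
  · exact fun h => .inr ⟨m, h, rfl⟩

theorem exists_primrec_mem_joinMany {k : ℕ} (i : Fin k) :
    ∃ pos : ℕ → ℕ, Primrec pos ∧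
      ∀ (X : Fin k → Set ℕ) (j : ℕ), pos j ∈ joinMany X ↔ j ∈ X i := by
  induction k with
  | zero => exact i.elim0
  | succ k ih =>
    refine Fin.lastCases ?_ (fun i => ?_) i
    · exact ⟨_, Primrec.nat_double_succ, fun X j => two_mul_add_one_mem_turingJoin⟩
    · obtain ⟨pos, hpos, h⟩ := ih i
      exact ⟨_, Primrec.nat_double.comp hpos, fun X j =>
        two_mul_mem_turingJoin.trans (h (fun i => X i.castSucc) j)⟩

theorem charFn_eq_one_iff {X : Set ℕ} {n : ℕ} : charFn X n = 1 ↔ n ∈ X := by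
  simp [charFn]

theorem charFn_congr {X Y : Set ℕ} {m n : ℕ} (h : m ∈ X ↔ n ∈ Y) : charFn X m = charFn Y n := by
  classical exact if_congr h rfl rfl

theorem chi_eq_true_iff {X : Set ℕ} {n : ℕ} : chi X n = true ↔ n ∈ X := by
  simp [chi]

theorem ComputableFrom.chi_of_mem_iff {X J : Set ℕ} {p : ℕ → ℕ} (hp : Primrec p)
    (h : ∀ n, p n ∈ J ↔ n ∈ X) : ComputableFrom (charFn J) (chi X) := by
  have hg : Primrec fun n : ℕ => decide (n = 1) :=
    (Primrec.eq.comp Primrec.id (Primrec.const 1)).decide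
  convert (ComputableFrom.of_primrec hp).oracle.map (O := charFn J) hg using 1
  funext n
  rw [Bool.eq_iff_iff, chi_eq_true_iff, decide_eq_true_iff, charFn_eq_one_iff, h]

theorem ComputableFrom.ofFn_chi {X : Set ℕ} (hX : ComputableFrom O (chi X)) :
    ComputableFrom O fun m => List.ofFn fun j : Fin m => chi X j := by
  convert hX.natRec [] Primrec.list_concat using 1
  funext m
  induction m with
  | zero => rfl
  | succ m ih => simp only [List.ofFn_succ_last, Fin.val_castSucc, Fin.val_last, ih]

theorem turingLE_section {k : ℕ} (X : Fin k → Set ℕ) (T : Set ℕ) :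
    TuringLE {x | ∃ τ : List Bool, x = Encodable.encode τ ∧
      Encodable.encode ((List.ofFn fun i : Fin k =>
        List.ofFn fun j : Fin τ.length => chi (X i) j.val) ++ [τ]) ∈ T}
      (turingJoin (joinMany X) T) := by
  set J := turingJoin (joinMany X) T with hJ
  let dec : ℕ → List Bool := fun x => (Encodable.decode x).getD []
  have hdec : Primrec dec := Primrec.option_getD.comp Primrec.decode (Primrec.const [])
  have hchi : ∀ i, ComputableFrom (charFn J) (chi (X i)) := fun i => by
    obtain ⟨pos, hpos, h⟩ := exists_primrec_mem_joinMany i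
    exact .chi_of_mem_iff (Primrec.nat_double.comp hpos) fun n =>
      two_mul_mem_turingJoin.trans (h X n)
  have hrows : ComputableFrom (charFn J) fun x => (List.ofFn fun i : Fin k =>
      List.ofFn fun j : Fin (dec x).length => chi (X i) j.val) ++ [dec x] :=
    .map₂ (g := fun l (τ : List Bool) => l ++ [τ]) Primrec.list_concat
      (.ofFn fun i => (hchi i).ofFn_chi.comp (.of_primrec (Primrec.list_length.comp hdec)))
      (.of_primrec hdec)
  have hquery := (hrows.map (Primrec.nat_double_succ.comp Primrec.encode)).oracle
  have hvalid : Primrec fun x => if Encodable.encode (dec x) = x then 1 else 0 :=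
    Primrec.ite (Primrec.eq.comp (Primrec.encode.comp hdec) Primrec.id) (Primrec.const 1)
      (Primrec.const 0)
  refine RecursiveIn.of_eq (ComputableFrom.map₂ Primrec.nat_mul
    (ComputableFrom.of_primrec hvalid) hquery) fun x => congrArg Part.some ?_
  simp only [Encodable.encode_nat]
  by_cases hx : Encodable.encode (dec x) = x
  · rw [if_pos hx, one_mul]
    refine charFn_congr ?_
    rw [hJ, two_mul_add_one_mem_turingJoin]
    constructor
    · exact fun h => ⟨dec x, hx.symm, h⟩
    · rintro ⟨τ, rfl, h⟩
      have : dec (Encodable.encode τ) = τ := by simp [dec]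
      rwa [this]
  · rw [if_neg hx, zero_mul, charFn, if_neg]
    rintro ⟨τ, rfl, -⟩
    exact hx (by simp [dec])

theorem TuringIdeal.joinMany_mem {S : Set (Set ℕ)} (hS : TuringIdeal S) (hne : S.Nonempty)
    {k : ℕ} {X : Fin k → Set ℕ} (hX : ∀ i, X i ∈ S) : joinMany X ∈ S := by
  induction k with
  | zero =>
    obtain ⟨Y, hY⟩ := hne
    refine hS.2 Y hY _ (RecursiveIn.zero.of_eq fun n => ?_)
    simp [joinMany, charFn]
    rfl
  | succ k ih => exact hS.1 _ (ih fun i => hX i.castSucc) _ (hX _)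

end Oracle

end Arith

namespace Arith

theorem encode_mem_section_iff {M : Type*} [arith.Structure M] {k : ℕ}
    (f : Fin (k + 2) → M → M) (X : Fin (k + 1) → Set ℕ) (d : M) (τ : List Bool) :
    Encodable.encode τ ∈ {x | ∃ τ : List Bool, x = Encodable.encode τ ∧
      Encodable.encode ((List.ofFn fun i : Fin (k + 1) =>
        List.ofFn fun j : Fin τ.length => chi (X i) j.val) ++ [τ]) ∈
      {x | ∃ l : List (List Bool), x = Encodable.encode l ∧
        l.length = k + 2 ∧ (∀ s ∈ l, s.length = (l.headD []).length) ∧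
        ∃ c : M, ltM c d ∧ ∀ (i : Fin (k + 2)), ∀ n < (l.getD i.val []).length,
          (digitB (f i c) n ↔ (l.getD i.val []).getD n false = true)}} ↔
    ∃ c : M, ltM c d ∧
      (∀ i : Fin (k + 1), ∀ n < τ.length, (n ∈ X i ↔ digitB (f i.castSucc c) n)) ∧
      ∀ n < τ.length, (digitB (f (Fin.last (k + 1)) c) n ↔ τ.getD n false = true) := by
  set l : List (List Bool) := (List.ofFn fun i : Fin (k + 1) =>
    List.ofFn fun j : Fin τ.length => chi (X i) j.val) ++ [τ] with hl
  have hlen : l.length = k + 2 := by simp [hl]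
  have heq : ∀ s ∈ l, s.length = τ.length := by
    intro s hs
    simp only [hl, List.mem_append, List.mem_ofFn, List.mem_singleton] at hs
    rcases hs with ⟨i, rfl⟩ | rfl <;> simp
  have hhead : ∀ s ∈ l, s.length = (l.headD []).length := by
    intro s hs
    rw [heq s hs]
    refine (heq _ ?_).symm
    obtain ⟨t, l', hl'⟩ := List.exists_cons_of_length_eq_add_one hlen
    simp [hl']
  have hinit : ∀ i : Fin (k + 1), l.getD i.castSucc.val [] =
      List.ofFn fun j : Fin τ.length => chi (X i) j.val := fun i => by
    have hi : i.castSucc.val < (List.ofFn fun i : Fin (k + 1) =>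
        List.ofFn fun j : Fin τ.length => chi (X i) j.val).length := by
      rw [List.length_ofFn]
      exact i.isLt
    rw [hl, List.getD_append _ _ _ _ hi, List.getD_eq_getElem _ _ hi, List.getElem_ofFn]
    rfl
  have hlast : l.getD (Fin.last (k + 1)).val [] = τ := by
    rw [hl, List.getD_append_right _ _ _ _ (by simp)]
    simp
  have hbody : ∀ c, (∀ (i : Fin (k + 2)), ∀ n < (l.getD i.val []).length,
      (digitB (f i c) n ↔ (l.getD i.val []).getD n false = true)) ↔
      (∀ i : Fin (k + 1), ∀ n < τ.length, (n ∈ X i ↔ digitB (f i.castSucc c) n)) ∧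
      ∀ n < τ.length, (digitB (f (Fin.last (k + 1)) c) n ↔ τ.getD n false = true) := fun c => by
    rw [Fin.forall_fin_succ', hlast]
    refine and_congr_left' (forall_congr' fun i => ?_)
    rw [hinit, List.length_ofFn]
    refine forall₂_congr fun n hn => ?_
    rw [List.getD_eq_getElem _ _ (by simpa using hn), List.getElem_ofFn, chi_eq_true_iff]
    exact Iff.comm
  constructor
  · rintro ⟨τ', hτ, l', hl', -, -, c, hc, h⟩
    obtain rfl := Encodable.encode_injective hτ
    obtain rfl := Encodable.encode_injective hl'
    exact ⟨c, hc, (hbody c).1 h⟩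
  · rintro ⟨c, hc, h⟩
    exact ⟨τ, rfl, l, rfl, hlen, hhead, c, hc, (hbody c).2 h⟩

end Arith

open Arith in
/-- The key step in the proof of Ehrenfeucht's theorem.  With `M` a countable
non-standard model of `PA`, `SSy(M) ⊆ S` a Scott set, `a ∈ M − ω`, `f₀, …, f_{k+1}`
`M`-definable (coded) functions, `X₀, …, X_k ∈ S` such that
`p_k(x) = {x < 2^a} ∪ {(f_i(x))_n = X_i(n) : i ≤ k, n ∈ ω}` is finitely realizable in
`M`, `T` the coded set of tuples `σ⃗ = (σ_i : i ≤ k+1)` of finite binary sequences of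
equal length with `W(σ⃗) ≠ ∅`, and `T'` the set of `τ` with `(τ₀, …, τ_k, τ) ∈ T` where
`τ_i = X_i ↾ |τ|`: then `T ∈ SSy(M)`, `T'` is an infinite binary tree Turing reducible
to `(⊕_{i≤k} X_i) ⊕ T`, `S` contains an infinite path `X_{k+1}` of `T'`, and
`p_{k+1}(x) = p_k(x) ∪ {(f_{k+1}(x))_n = X_{k+1}(n) : n ∈ ω}` is finitely realizable
in `M`. -/
theorem statement_16 (S : Set (Set ℕ)) (hS : ScottSet S)
    (M : Type) [arith.Structure M] (hM : NonstandardModel M) (hMc : Countable M)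
    (hsub : SSy M ⊆ S)
    (a d : M) (ha : ¬ IsStd a) (hd : IsPow2 a d)
    (k : ℕ) (f : Fin (k + 2) → M → M) (hf : ∀ i, DefinableFun₁ (f i))
    (X : Fin (k + 1) → Set ℕ) (hX : ∀ i, X i ∈ S)
    (hreal : ∀ mf : ℕ, ∃ c : M, ltM c d ∧
      ∀ (i : Fin (k + 1)), ∀ n < mf, (n ∈ X i ↔ digitB (f i.castSucc c) n))
    (T : Set ℕ)
    (hT : T = {x | ∃ l : List (List Bool), x = Encodable.encode l ∧
      l.length = k + 2 ∧ (∀ s ∈ l, s.length = (l.headD []).length) ∧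
      ∃ c : M, ltM c d ∧ ∀ (i : Fin (k + 2)), ∀ n < (l.getD i.val []).length,
        (digitB (f i c) n ↔ (l.getD i.val []).getD n false = true)})
    (T' : Set ℕ)
    (hT' : T' = {x | ∃ τ : List Bool, x = Encodable.encode τ ∧
      Encodable.encode ((List.ofFn fun i : Fin (k + 1) =>
        List.ofFn fun j : Fin τ.length => chi (X i) j.val) ++ [τ]) ∈ T}) :
    T ∈ SSy M ∧
    IsBinTreeSet T' ∧ TreeInf T' ∧
    TuringLE T' (turingJoin (joinMany X) T) ∧
    ∃ P ∈ S, PathThrough P T' ∧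
      ∀ mf : ℕ, ∃ c : M, ltM c d ∧
        (∀ (i : Fin (k + 1)), ∀ n < mf, (n ∈ X i ↔ digitB (f i.castSucc c) n)) ∧
        (∀ n < mf, (n ∈ P ↔ digitB (f (Fin.last (k + 1)) c) n)) := by
  have hPA := hM.1
  have hTmem : T ∈ SSy M := hT ▸ hPA.tree_mem_SSy ha hf
  have hTuring : TuringLE T' (turingJoin (joinMany X) T) := hT' ▸ turingLE_section X T
  have hmem : ∀ τ : List Bool, Encodable.encode τ ∈ T' ↔ ∃ c : M, ltM c d ∧
      (∀ i : Fin (k + 1), ∀ n < τ.length, (n ∈ X i ↔ digitB (f i.castSucc c) n)) ∧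
      ∀ n < τ.length, (digitB (f (Fin.last (k + 1)) c) n ↔ τ.getD n false = true) := fun τ => by
    rw [hT', hT]
    exact encode_mem_section_iff f X d τ
  have htree : IsBinTreeSet T' := by
    intro s hs t hts
    obtain ⟨c, hc, hX, hs⟩ := (hmem s).1 hs
    refine (hmem t).2 ⟨c, hc, fun i n hn => hX i n (hn.trans_le hts.length_le), fun n hn => ?_⟩
    rw [hs n (hn.trans_le hts.length_le)]
    obtain ⟨u, rfl⟩ := hts
    rw [List.getD_append _ _ _ _ hn]
  have hinf : TreeInf T' := by
    classical
    have hlevel : ∀ m, ∃ s : List Bool, Encodable.encode s ∈ T' ∧ s.length = m := fun m => by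
      obtain ⟨c, hc, h⟩ := hreal m
      refine ⟨List.ofFn fun j : Fin m => decide (digitB (f (Fin.last (k + 1)) c) j),
        (hmem _).2 ⟨c, hc, by simpa using h, fun n hn => ?_⟩, by simp⟩
      rw [List.getD_eq_getElem _ _ hn]
      simp
    choose s hs hlen using hlevel
    exact Set.infinite_of_injective_forall_mem (f := s)
      (fun m n h => by rw [← hlen m, ← hlen n, h]) hs
  obtain ⟨hne, hideal, hpath⟩ := hS
  have hT'S : T' ∈ S :=
    hideal.2 _ (hideal.1 _ (hideal.joinMany_mem hne hX) _ (hsub hTmem)) _ hTuring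
  obtain ⟨P, hP, hPT⟩ := hpath T' hT'S htree hinf
  refine ⟨hTmem, htree, hinf, hTuring, P, hP, hPT, fun mf => ?_⟩
  obtain ⟨c, hc, hX, h⟩ := (hmem _).1 (hPT (chi P) (fun i => chi_eq_true_iff) mf)
  refine ⟨c, hc, by simpa using hX, fun n hn => ?_⟩
  rw [h n (by simpa using hn), List.getD_eq_getElem _ _ (by simpa using hn)]
  simp [chi_eq_true_iff]
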